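/- Let ζ ∈ (-1/2, ∞) and α ∈ (0,2). Define F(r,s) := 1 if rs < 1 and (r-s)² < 1; F(r,s) := (rs)^{-ζ} if (r-s)² < 1 < rs; F(r,s) := |r-s|^{-(2ζ+1+α)} if rs < 1 < (r-s)², or if rs > 1, (r-s)² > 1 and rs < (r-s)²; F(r,s) := (rs)^{-ζ}|r-s|^{-(1+α)} if rs > 1, (r-s)² > 1 and rs > (r-s)². Then there exist constants c, C > 0 (depending only on ζ and α) such that for all r, s > 0: c · F(r,s) ≤ p_ζ^{(α)}(1,r,s) ≤ C · F(r,s). -/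

import Mathlib

open MeasureTheory Real Set Filter

/-- Modified Bessel function of the first kind of order `ν`. -/
noncomputable def besselI (ν x : ℝ) : ℝ :=
  ∑' k : ℕ, (x / 2) ^ (2 * (k : ℝ) + ν) / ((Nat.factorial k : ℝ) * Real.Gamma ((k : ℝ) + ν + 1))

/-- The Bessel heat kernel `p_ζ^{(2)}(t,r,s)`. -/
noncomputable def besselHeat (ζ t r s : ℝ) : ℝ :=
  (r * s) ^ ((1 : ℝ) / 2 - ζ) / (2 * t) * Real.exp (-(r ^ 2 + s ^ 2) / (4 * t)) *
    besselI (ζ - 1 / 2) (r * s / (2 * t))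

/-- `σ` is a family of `α/2`-stable subordinator densities. -/
def IsStableSubordinatorDensity (α : ℝ) (σ : ℝ → ℝ → ℝ) : Prop :=
  (∀ t, 0 < t → ∀ τ, 0 < τ → 0 ≤ σ t τ) ∧
  (∀ t, 0 < t → Measurable (σ t)) ∧
  (∀ t l : ℝ, 0 < t → 0 ≤ l →
    (∫ τ in Ioi (0 : ℝ), Real.exp (-τ * l) * σ t τ) = Real.exp (-t * l ^ (α / 2)))

/-- The `α/2`-subordinated Bessel heat kernel `p_ζ^{(α)}(t,r,s)`. -/
noncomputable def subKernel (ζ : ℝ) (σ : ℝ → ℝ → ℝ) (t r s : ℝ) : ℝ :=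
  ∫ τ in Ioi (0 : ℝ), besselHeat ζ τ r s * σ t τ

/-!
Dividing the coefficients of the series of `I_ν` by those of `cosh` leaves a ratio of Gamma values
comparable to `(k + 1) ^ (-(ν + 1 / 2))`. The corresponding moments of the `cosh` series are
comparable to `(1 + x) ^ (-(ν + 1 / 2)) * exp x`, because the mass of that series concentrates at
`k ≈ x / 2`; the lower bound follows from the upper bound for the opposite exponent, as
`2 * a - a ^ 2 * y⁻¹ ≤ y`. Hence the Bessel heat kernel at time `t` is comparable to
`t ^ (-1 / 2) * (r * s / 2 + t) ^ (-ζ) * exp (-(r - s) ^ 2 / (4 * t))`.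

Put `D = max 1 ((r - s) ^ 2)`. The algebraic factor at time `τ` is at most `(1 + D / τ) ^ (ζ + 1)`
times its value at time `D`, and symmetrically. The subordinator integral therefore reduces to two
facts about the stable density `w`: the integral of
`(1 + D / τ) ^ (ζ + 1) * exp (-(r - s) ^ 2 / (4 * τ)) * w τ` is at most a multiple of
`D ^ (-α / 2)`, and the mass of `w` on times comparable to `D` is at least such a multiple. Both are
read off the Laplace transform through `∫ (1 - exp (-τ / D)) * w τ = 1 - exp (-D ^ (-α / 2))`, which
is comparable to `D ^ (-α / 2)`. So the subordinated kernel is comparable to the algebraic factor at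
time `D` times `D ^ (-α / 2)`.
-/

open Asymptotics

section Theta

variable {X ι Y : Type*} {S : Set X}

theorem isTheta_principal_iff_of_nonneg {f g : X → ℝ} (hf : ∀ x ∈ S, 0 ≤ f x)
    (hg : ∀ x ∈ S, 0 ≤ g x) :
    f =Θ[𝓟 S] g ↔ ∃ c C : ℝ, 0 < c ∧ 0 < C ∧ ∀ x ∈ S, c * g x ≤ f x ∧ f x ≤ C * g x := by
  have norm_le_iff {f g : X → ℝ} (hf : ∀ x ∈ S, 0 ≤ f x) (hg : ∀ x ∈ S, 0 ≤ g x) (C : ℝ) :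
      (∀ x ∈ S, ‖f x‖ ≤ C * ‖g x‖) ↔ ∀ x ∈ S, f x ≤ C * g x :=
    forall₂_congr fun x hx => by rw [norm_of_nonneg (hf x hx), norm_of_nonneg (hg x hx)]
  simp only [IsTheta, isBigO_iff', eventually_principal, norm_le_iff hf hg, norm_le_iff hg hf]
  constructor
  · rintro ⟨⟨C, hC, hfg⟩, c, hc, hgf⟩
    exact ⟨c⁻¹, C, inv_pos.2 hc, hC, fun x hx => ⟨(inv_mul_le_iff₀ hc).2 (hgf x hx), hfg x hx⟩⟩
  · rintro ⟨c, C, hc, hC, h⟩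
    exact ⟨⟨C, hC, fun x hx => (h x hx).2⟩,
      c⁻¹, inv_pos.2 hc, fun x hx => (le_inv_mul_iff₀ hc).2 (h x hx).1⟩

theorem isTheta_nat_atTop_iff {u v : ℕ → ℝ} (hu : ∀ n, u n ≠ 0) (hv : ∀ n, v n ≠ 0) :
    u =Θ[atTop] v ↔ u =Θ[⊤] v := by
  simp only [IsTheta, isBigO_top]
  rw [isBigO_nat_atTop_iff fun n h => absurd h (hv n),
    isBigO_nat_atTop_iff fun n h => absurd h (hu n)]

theorem isTheta_tsum_mul {w : X → ι → ℝ} {a b : ι → ℝ} (hab : a =Θ[⊤] b) (ha : ∀ i, 0 ≤ a i)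
    (hb : ∀ i, 0 ≤ b i) (hw : ∀ x ∈ S, ∀ i, 0 ≤ w x i)
    (hsum : ∀ x ∈ S, Summable fun i => w x i * b i) :
    (fun x => ∑' i, w x i * a i) =Θ[𝓟 S] fun x => ∑' i, w x i * b i := by
  rw [← principal_univ,
    isTheta_principal_iff_of_nonneg (fun i _ => ha i) fun i _ => hb i] at hab
  obtain ⟨c, C, hc, hC, hab⟩ := hab
  refine (isTheta_principal_iff_of_nonneg
    (fun x hx => tsum_nonneg fun i => mul_nonneg (hw x hx i) (ha i))
    (fun x hx => tsum_nonneg fun i => mul_nonneg (hw x hx i) (hb i))).2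
    ⟨c, C, hc, hC, fun x hx => ?_⟩
  have lower (i : ι) : c * (w x i * b i) ≤ w x i * a i := by
    rw [mul_left_comm]
    exact mul_le_mul_of_nonneg_left (hab i trivial).1 (hw x hx i)
  have upper (i : ι) : w x i * a i ≤ C * (w x i * b i) := by
    rw [mul_left_comm]
    exact mul_le_mul_of_nonneg_left (hab i trivial).2 (hw x hx i)
  have hsum_a : Summable fun i => w x i * a i :=
    ((hsum x hx).mul_left C).of_nonneg_of_le (fun i => mul_nonneg (hw x hx i) (ha i)) upper
  simp only [← tsum_mul_left]
  exact ⟨((hsum x hx).mul_left c).tsum_le_tsum lower hsum_a,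
    hsum_a.tsum_le_tsum upper ((hsum x hx).mul_left C)⟩

theorem isTheta_setIntegral_mul [MeasurableSpace Y] {μ : Measure Y} {T : Set Y}
    (hT : MeasurableSet T) {f g : X → Y → ℝ} {w : Y → ℝ}
    (hfg : (fun p : X × Y => f p.1 p.2) =Θ[𝓟 (S ×ˢ T)] fun p => g p.1 p.2)
    (hf : ∀ x ∈ S, ∀ y ∈ T, 0 ≤ f x y) (hg : ∀ x ∈ S, ∀ y ∈ T, 0 ≤ g x y)
    (hw : ∀ y ∈ T, 0 ≤ w y)
    (hmeas : ∀ x ∈ S, AEStronglyMeasurable (fun y => f x y * w y) (μ.restrict T))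
    (hint : ∀ x ∈ S, IntegrableOn (fun y => g x y * w y) T μ) :
    (fun x => ∫ y in T, f x y * w y ∂μ) =Θ[𝓟 S] fun x => ∫ y in T, g x y * w y ∂μ := by
  rw [isTheta_principal_iff_of_nonneg (fun p hp => hf p.1 hp.1 p.2 hp.2)
    fun p hp => hg p.1 hp.1 p.2 hp.2] at hfg
  obtain ⟨c, C, hc, hC, hfg⟩ := hfg
  refine (isTheta_principal_iff_of_nonneg
    (fun x hx => setIntegral_nonneg hT fun y hy => mul_nonneg (hf x hx y hy) (hw y hy))
    (fun x hx => setIntegral_nonneg hT fun y hy => mul_nonneg (hg x hx y hy) (hw y hy))).2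
    ⟨c, C, hc, hC, fun x hx => ?_⟩
  have lower : ∀ y ∈ T, c * (g x y * w y) ≤ f x y * w y := fun y hy => by
    rw [← mul_assoc]
    exact mul_le_mul_of_nonneg_right (hfg (x, y) ⟨hx, hy⟩).1 (hw y hy)
  have upper : ∀ y ∈ T, f x y * w y ≤ C * (g x y * w y) := fun y hy => by
    rw [← mul_assoc]
    exact mul_le_mul_of_nonneg_right (hfg (x, y) ⟨hx, hy⟩).2 (hw y hy)
  have hint_f : IntegrableOn (fun y => f x y * w y) T μ := by
    refine ((hint x hx).const_mul C).mono' (hmeas x hx) ((ae_restrict_iff' hT).2 (.of_forall ?_))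
    intro y hy
    rw [norm_of_nonneg (mul_nonneg (hf x hx y hy) (hw y hy))]
    exact upper y hy
  simp only [← integral_const_mul]
  exact ⟨setIntegral_mono_on ((hint x hx).const_mul c) hint_f hT lower,
    setIntegral_mono_on hint_f ((hint x hx).const_mul C) hT upper⟩

end Theta

section Gamma

theorem prod_range_add_mul_Gamma {s : ℝ} (hs : 0 < s) (n : ℕ) :
    (∏ j ∈ Finset.range n, (s + j)) * Gamma s = Gamma (s + n) := by
  induction n with
  | zero => simp
  | succ n ih =>
    rw [Finset.prod_range_succ, mul_right_comm, ih, mul_comm, ← Gamma_add_one (by positivity),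
      Nat.cast_add_one, add_assoc]

theorem Gamma_nat_add_isTheta {ν : ℝ} (hν : -1 < ν) :
    (fun n : ℕ => Gamma (n + ν + 1)) =Θ[⊤] fun n => (n.factorial : ℝ) * ((n : ℝ) + 1) ^ ν := by
  have hs : 0 < ν + 1 := by linarith
  have hΓ (n : ℕ) : 0 < Gamma (n + ν + 1) := Gamma_pos_of_pos (by rw [add_assoc]; positivity)
  have gammaSeq_eq : ∀ᶠ n : ℕ in atTop, GammaSeq (ν + 1) n / Gamma (ν + 1) *
      ((n / (n + (ν + 1))) ^ (-1 : ℝ) * (n / (n + 1)) ^ (-ν)) =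
      (n.factorial * ((n : ℝ) + 1) ^ ν) / Gamma (n + ν + 1) := by
    filter_upwards [eventually_gt_atTop 0] with n hn
    have hn : (0 : ℝ) < n := Nat.cast_pos.2 hn
    have hprod := prod_range_add_mul_Gamma hs (n + 1)
    have hΓ_succ : Gamma (ν + 1 + (n + 1 : ℕ)) = (n + (ν + 1)) * Gamma (n + ν + 1) := by
      rw [← add_assoc (n : ℝ), ← Gamma_add_one (by rw [add_assoc]; positivity)]
      push_cast
      ring_nf
    rw [GammaSeq, div_div, hprod, hΓ_succ, rpow_add_one hn.ne', rpow_neg_one, div_rpow hn.le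
      (by positivity), rpow_neg hn.le, rpow_neg (by positivity)]
    have := hΓ n
    field_simp
  rw [← isTheta_nat_atTop_iff (fun n => (hΓ n).ne') fun n => by positivity]
  refine isTheta_of_div_tendsto_nhds_ne_zero (c := 1) (Tendsto.congr' gammaSeq_eq ?_) one_ne_zero
  have hlim (b p : ℝ) : Tendsto (fun n : ℕ => (n / (n + b)) ^ p) atTop (nhds 1) := by
    simpa using (tendsto_natCast_div_add_atTop b).rpow_const (p := p) (.inl one_ne_zero)
  simpa [div_self (Gamma_pos_of_pos hs).ne'] using
    ((GammaSeq_tendsto_Gamma (ν + 1)).div_const (Gamma (ν + 1))).mul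
      ((hlim (ν + 1) (-1)).mul (hlim 1 (-ν)))

theorem factorial_mul_Gamma_nat_add_half (k : ℕ) :
    k.factorial * Gamma (k + 1 / 2) = (2 * k).factorial / 2 ^ (2 * k) * √π := by
  have h := Gamma_mul_Gamma_add_half ((k : ℝ) + 1 / 2)
  rwa [add_assoc (k : ℝ), add_halves, Gamma_nat_eq_factorial, mul_comm, mul_add, mul_one_div_cancel
    two_ne_zero, ← Nat.cast_ofNat, ← Nat.cast_mul, Gamma_nat_eq_factorial, sub_add_cancel_right,
    rpow_neg (by simp), rpow_natCast, ← div_eq_mul_inv, Nat.cast_ofNat] at h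

end Gamma

section Exponential

theorem rpow_le_mul_exp {q ε y : ℝ} (hq : 0 ≤ q) (hε : 0 < ε) (hy : 0 ≤ y) :
    y ^ q ≤ ((1 + q) / ε) ^ q * exp (ε * y) := by
  calc y ^ q = ((1 + q) / ε) ^ q * (ε * y / (1 + q)) ^ q := by
        rw [← mul_rpow (by positivity) (by positivity)]
        congr 1
        field_simp
    _ ≤ ((1 + q) / ε) ^ q * exp (ε * y / (1 + q)) ^ q := by
        gcongr
        linarith [add_one_le_exp (ε * y / (1 + q))]
    _ ≤ ((1 + q) / ε) ^ q * exp (ε * y) := by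
        rw [← exp_mul, div_mul_eq_mul_div]
        gcongr
        rw [div_le_iff₀ (by positivity)]
        gcongr
        linarith

theorem cosh_le_exp {x : ℝ} (hx : 0 ≤ x) : cosh x ≤ exp x := by
  linarith [cosh_add_sinh x, sinh_nonneg_iff.2 hx]

theorem div_one_add_le_one_sub_exp_neg {x : ℝ} (hx : 0 ≤ x) : x / (1 + x) ≤ 1 - exp (-x) := by
  have h : exp (-x) ≤ (1 + x)⁻¹ := by
    rw [exp_neg]
    gcongr
    linarith [add_one_le_exp x]
  calc x / (1 + x) = 1 - (1 + x)⁻¹ := by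
        field_simp
        ring
    _ ≤ 1 - exp (-x) := by gcongr

theorem exists_one_add_inv_rpow_mul_exp_le {q : ℝ} (hq : 0 ≤ q) : ∃ C : ℝ, 0 < C ∧ ∀ x, 0 < x →
    (1 + x⁻¹) ^ q * exp (-(x⁻¹ / 4)) ≤ C * (1 - exp (-x)) := by
  refine ⟨((1 + (q + 1)) / (1 / 4)) ^ (q + 1) * exp (1 / 4), by positivity, fun x hx => ?_⟩
  have hpow := rpow_le_mul_exp (q := q + 1) (ε := 1 / 4) (y := 1 + x⁻¹) (by positivity)
    (by norm_num) (by positivity)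
  calc (1 + x⁻¹) ^ q * exp (-(x⁻¹ / 4))
      = (1 + x⁻¹) ^ (q + 1) * (exp (-(x⁻¹ / 4)) * (x / (1 + x))) := by
        rw [rpow_add_one (by positivity)]
        field_simp
        rw [add_comm 1 x]
    _ ≤ ((1 + (q + 1)) / (1 / 4)) ^ (q + 1) * exp (1 / 4 * (1 + x⁻¹)) *
          (exp (-(x⁻¹ / 4)) * (x / (1 + x))) := by gcongr
    _ = ((1 + (q + 1)) / (1 / 4)) ^ (q + 1) * exp (1 / 4) * (x / (1 + x)) := by
        rw [mul_add, exp_add, exp_neg]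
        field_simp
    _ ≤ _ := by
        gcongr
        exact div_one_add_le_one_sub_exp_neg hx.le

theorem one_add_rpow_le {q x : ℝ} (hq : 0 ≤ q) (hx : 0 ≤ x) :
    (1 + x) ^ q ≤ 2 ^ q * (1 + x ^ q) := by
  rcases le_total x 1 with h | h
  · calc (1 + x) ^ q ≤ 2 ^ q := by
          gcongr
          linarith
      _ ≤ 2 ^ q * (1 + x ^ q) :=
          le_mul_of_one_le_right (by positivity) (le_add_of_nonneg_right (by positivity))
  · calc (1 + x) ^ q ≤ (2 * x) ^ q := by
          gcongr
          linarith
      _ = 2 ^ q * x ^ q := mul_rpow zero_le_two hx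
      _ ≤ 2 ^ q * (1 + x ^ q) := by
          gcongr
          linarith

theorem exp_neg_div_four_mul_le_one {d τ : ℝ} (hd : 0 ≤ d) (hτ : 0 ≤ τ) :
    exp (-d / (4 * τ)) ≤ 1 :=
  exp_le_one_iff.2 (div_nonpos_of_nonpos_of_nonneg (neg_nonpos.2 hd) (by positivity))

theorem one_sub_exp_neg_div_le_indicator_add {δ K D τ : ℝ} (hδ : 0 < δ) (hK : 0 < K) (hD : 0 < D)
    (hτ : 0 < τ) :
    1 - exp (-(τ / D)) ≤ (Icc (δ * D) (K * D)).indicator 1 τ +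
      (2 * δ * (1 - exp (-(τ / (δ * D)))) + 2 * (1 - exp (-(τ / (K * D))))) := by
  have hnonneg (y : ℝ) (hy : 0 < y) : 0 ≤ 1 - exp (-y) := by simpa using hy.le
  have hδ_nonneg := mul_nonneg hδ.le (hnonneg (τ / (δ * D)) (by positivity))
  have hK_nonneg := hnonneg (τ / (K * D)) (by positivity)
  by_cases hmem : τ ∈ Icc (δ * D) (K * D)
  · rw [indicator_of_mem hmem, Pi.one_apply]
    linarith [exp_pos (-(τ / D))]
  rw [indicator_of_notMem hmem, zero_add]
  rcases not_and_or.1 hmem with h | h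
  · have hx : τ / (δ * D) < 1 := (div_lt_one (by positivity)).2 (not_le.1 h)
    have hδx : τ / D / 2 ≤ δ * (1 - exp (-(τ / (δ * D)))) := by
      calc τ / D / 2 = δ * (τ / (δ * D) / (1 + 1)) := by
            field_simp
            norm_num
        _ ≤ δ * (τ / (δ * D) / (1 + τ / (δ * D))) := by gcongr
        _ ≤ δ * (1 - exp (-(τ / (δ * D)))) := by
            gcongr
            exact div_one_add_le_one_sub_exp_neg (by positivity)
    linarith [add_one_le_exp (-(τ / D))]
  · have hx : 1 < τ / (K * D) := (one_lt_div (by positivity)).2 (not_le.1 h)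
    have hx_half : 1 / 2 ≤ τ / (K * D) / (1 + τ / (K * D)) := by
      rw [div_le_div_iff₀ two_pos (by positivity)]
      linarith
    linarith [exp_pos (-(τ / D)), div_one_add_le_one_sub_exp_neg (zero_lt_one.trans hx).le]

end Exponential

section CoshMoments

/-- The `k`-th term of the power series of `cosh x`. The sums `∑' k, coshTerm x k * (k + 1) ^ p`
are the moments to which the Bessel series is compared. -/
noncomputable def coshTerm (x : ℝ) (k : ℕ) : ℝ :=
  x ^ (2 * k) / (2 * k).factorial

theorem coshTerm_nonneg (x : ℝ) (k : ℕ) : 0 ≤ coshTerm x k :=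
  div_nonneg ((even_two_mul k).pow_nonneg x) (by positivity)

theorem hasSum_coshTerm (x : ℝ) : HasSum (coshTerm x) (cosh x) :=
  hasSum_cosh x

theorem hasSum_coshTerm_mul_exp (x u : ℝ) :
    HasSum (fun k : ℕ => coshTerm x k * exp (u * (k + 1))) (exp u * cosh (x * exp (u / 2))) := by
  have hexp (k : ℕ) : exp (u * (k + 1)) = exp u * exp (u / 2) ^ (2 * k) := by
    rw [← exp_nat_mul, ← exp_add]
    push_cast
    ring_nf
  refine ((hasSum_coshTerm (x * exp (u / 2))).mul_left (exp u)).congr_fun fun k => ?_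
  simp only [coshTerm, hexp]
  ring

theorem tsum_coshTerm_mul_exp_le {x : ℝ} (hx : 0 ≤ x) (u : ℝ) :
    ∑' k : ℕ, coshTerm x k * exp (u * (k + 1)) ≤ exp (u + x * exp (u / 2)) := by
  rw [(hasSum_coshTerm_mul_exp x u).tsum_eq, exp_add]
  gcongr
  exact cosh_le_exp (by positivity)

theorem summable_coshTerm_mul_rpow (x p : ℝ) :
    Summable fun k : ℕ => coshTerm x k * ((k : ℝ) + 1) ^ p := by
  refine ((hasSum_coshTerm_mul_exp x 1).summable.mul_left (((1 + |p|) / 1) ^ |p|)).of_nonneg_of_le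
    (fun k => mul_nonneg (coshTerm_nonneg x k) (by positivity)) fun k => ?_
  rw [mul_left_comm]
  gcongr
  · exact coshTerm_nonneg x k
  · exact (rpow_le_rpow_of_exponent_le (by simp) (le_abs_self p)).trans
      (rpow_le_mul_exp (abs_nonneg p) one_pos (by positivity))

theorem tsum_coshTerm_mul_rpow_le_of_nonneg {x p : ℝ} (hx : 0 ≤ x) (hp : 0 ≤ p) :
    ∑' k : ℕ, coshTerm x k * ((k : ℝ) + 1) ^ p ≤ (1 + p) ^ p * exp 2 * ((1 + x) ^ p * exp x) := by
  set u := 1 / (1 + x) with hu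
  have hu1 : u ≤ 1 := (div_le_one (by positivity)).2 (by linarith)
  have rpow_le (k : ℕ) : ((k : ℝ) + 1) ^ p ≤ ((1 + p) * (1 + x)) ^ p * exp (u * (k + 1)) := by
    simpa [hu] using rpow_le_mul_exp hp (ε := u) (by positivity) (y := (k : ℝ) + 1) (by positivity)
  have exponent_le : x * exp (u / 2) ≤ x + 1 := by
    calc x * exp (u / 2) ≤ x * (1 / (1 - u / 2)) := by
          gcongr
          exact exp_bound_div_one_sub_of_interval (by positivity) (by linarith)
      _ ≤ x + 1 := by
          rw [mul_one_div, div_le_iff₀ (by linarith), hu]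
          field_simp
          nlinarith
  calc ∑' k : ℕ, coshTerm x k * ((k : ℝ) + 1) ^ p
      ≤ ∑' k : ℕ, ((1 + p) * (1 + x)) ^ p * (coshTerm x k * exp (u * (k + 1))) := by
        refine (summable_coshTerm_mul_rpow x p).tsum_le_tsum (fun k => ?_)
          ((hasSum_coshTerm_mul_exp x u).summable.mul_left _)
        rw [mul_left_comm]
        exact mul_le_mul_of_nonneg_left (rpow_le k) (coshTerm_nonneg x k)
    _ ≤ ((1 + p) * (1 + x)) ^ p * exp (2 + x) := by
        rw [tsum_mul_left]
        gcongr
        exact (tsum_coshTerm_mul_exp_le hx u).trans (exp_le_exp.2 (by linarith))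
    _ = (1 + p) ^ p * exp 2 * ((1 + x) ^ p * exp x) := by
        rw [mul_rpow (by positivity) (by positivity), exp_add]
        ring

theorem exp_add_mul_exp_neg_half_le {x p : ℝ} (hx : 0 ≤ x) (hp : p ≤ 0) :
    exp ((1 + x) / 6 + (-1 + x * exp (-1 / 2))) ≤
      ((1 - p) / (1 / 6)) ^ (-p) * ((1 + x) ^ p * exp x) := by
  have hexp : exp (-1 / 2) ≤ 2 / 3 := by
    rw [neg_div, exp_neg, inv_le_comm₀ (exp_pos _) (by norm_num)]
    linarith [add_one_le_exp (1 / 2 : ℝ)]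
  have h := rpow_le_mul_exp (neg_nonneg.2 hp) (ε := 1 / 6) (by norm_num) (y := 1 + x)
    (by positivity)
  rw [rpow_neg (by positivity), inv_le_iff_one_le_mul₀' (by positivity)] at h
  calc exp ((1 + x) / 6 + (-1 + x * exp (-1 / 2))) ≤ exp (-(1 / 6 * (1 + x)) + x) := by
        refine exp_le_exp.2 ?_
        linarith [mul_le_mul_of_nonneg_left hexp hx]
    _ ≤ exp (-(1 / 6 * (1 + x)) + x) *
        ((1 + x) ^ p * (((1 - p) / (1 / 6)) ^ (-p) * exp (1 / 6 * (1 + x)))) :=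
        le_mul_of_one_le_right (exp_pos _).le h
    _ = ((1 - p) / (1 / 6)) ^ (-p) * ((1 + x) ^ p * exp x) := by
        rw [exp_add, exp_neg]
        field_simp

theorem tsum_coshTerm_mul_rpow_le_of_nonpos {x p : ℝ} (hx : 0 ≤ x) (hp : p ≤ 0) :
    ∑' k : ℕ, coshTerm x k * ((k : ℝ) + 1) ^ p ≤
      ((1 / 6) ^ p + ((1 - p) / (1 / 6)) ^ (-p)) * ((1 + x) ^ p * exp x) := by
  -- The terms with `k + 1 < (1 + x) / 6` carry an exponentially small part of `cosh x`.
  have rpow_le (k : ℕ) :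
      ((k : ℝ) + 1) ^ p ≤ ((1 + x) / 6) ^ p + exp ((1 + x) / 6) * exp (-1 * (k + 1)) := by
    rcases le_total ((1 + x) / 6) (k + 1) with h | h
    · exact (rpow_le_rpow_of_nonpos (by positivity) h hp).trans
        (le_add_of_nonneg_right (by positivity))
    · rw [← exp_add]
      calc ((k : ℝ) + 1) ^ p ≤ 1 := rpow_le_one_of_one_le_of_nonpos (by simp) hp
        _ ≤ exp ((1 + x) / 6 + -1 * (k + 1)) := one_le_exp (by linarith)
        _ ≤ _ := le_add_of_nonneg_left (by positivity)
  have hsum := (hasSum_coshTerm x).summable.mul_left (((1 + x) / 6) ^ p)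
  have hsum' := (hasSum_coshTerm_mul_exp x (-1)).summable.mul_left (exp ((1 + x) / 6))
  calc ∑' k : ℕ, coshTerm x k * ((k : ℝ) + 1) ^ p
      ≤ ∑' k : ℕ, (((1 + x) / 6) ^ p * coshTerm x k +
          exp ((1 + x) / 6) * (coshTerm x k * exp (-1 * (k + 1)))) := by
        refine (summable_coshTerm_mul_rpow x p).tsum_le_tsum (fun k => ?_) (hsum.add hsum')
        rw [mul_comm _ (coshTerm x k), mul_left_comm, ← mul_add]
        exact mul_le_mul_of_nonneg_left (rpow_le k) (coshTerm_nonneg x k)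
    _ ≤ ((1 + x) / 6) ^ p * exp x + exp ((1 + x) / 6) * exp (-1 + x * exp (-1 / 2)) := by
        rw [hsum.tsum_add hsum', tsum_mul_left, tsum_mul_left, (hasSum_coshTerm x).tsum_eq]
        gcongr
        · exact cosh_le_exp hx
        · exact tsum_coshTerm_mul_exp_le hx (-1)
    _ ≤ ((1 / 6) ^ p + ((1 - p) / (1 / 6)) ^ (-p)) * ((1 + x) ^ p * exp x) := by
        rw [← exp_add, add_mul]
        refine add_le_add (le_of_eq ?_) (exp_add_mul_exp_neg_half_le hx hp)
        rw [div_eq_mul_one_div, mul_rpow (by positivity) (by norm_num)]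
        ring

theorem exists_tsum_coshTerm_mul_rpow_le (p : ℝ) : ∃ C : ℝ, 0 < C ∧ ∀ x, 0 ≤ x →
    ∑' k : ℕ, coshTerm x k * ((k : ℝ) + 1) ^ p ≤ C * ((1 + x) ^ p * exp x) := by
  rcases le_total 0 p with hp | hp
  · exact ⟨(1 + p) ^ p * exp 2, by positivity,
      fun x hx => tsum_coshTerm_mul_rpow_le_of_nonneg hx hp⟩
  · exact ⟨(1 / 6) ^ p + ((1 - p) / (1 / 6)) ^ (-p), by
      have : 0 < 1 - p := by linarith
      positivity,
      fun x hx => tsum_coshTerm_mul_rpow_le_of_nonpos hx hp⟩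

theorem two_mul_sub_sq_mul_rpow_neg_le {y : ℝ} (hy : 0 < y) (p a : ℝ) :
    2 * a - a ^ 2 * y ^ (-p) ≤ y ^ p := by
  have : 0 < y ^ p := rpow_pos_of_pos hy p
  rw [rpow_neg hy.le, ← sub_nonneg]
  calc 0 ≤ (y ^ p - a) ^ 2 / y ^ p := by positivity
    _ = y ^ p - (2 * a - a ^ 2 * (y ^ p)⁻¹) := by
      field_simp
      ring

theorem mul_exp_sub_le_tsum_coshTerm_mul_rpow {a : ℝ} (ha : 0 ≤ a) (x p : ℝ) :
    a * exp x - a ^ 2 * ∑' k : ℕ, coshTerm x k * ((k : ℝ) + 1) ^ (-p) ≤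
      ∑' k : ℕ, coshTerm x k * ((k : ℝ) + 1) ^ p := by
  have hsum := (hasSum_coshTerm x).summable.mul_right (2 * a)
  have hsum' := (summable_coshTerm_mul_rpow x (-p)).mul_left (a ^ 2)
  calc a * exp x - a ^ 2 * ∑' k : ℕ, coshTerm x k * ((k : ℝ) + 1) ^ (-p)
      ≤ cosh x * (2 * a) - a ^ 2 * ∑' k : ℕ, coshTerm x k * ((k : ℝ) + 1) ^ (-p) := by
        refine sub_le_sub_right ?_ _
        have : exp x ≤ 2 * cosh x := by linarith [cosh_add_sinh x, sinh_lt_cosh x]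
        linarith [mul_le_mul_of_nonneg_left this ha]
    _ = ∑' k : ℕ, (coshTerm x k * (2 * a) - a ^ 2 * (coshTerm x k * ((k : ℝ) + 1) ^ (-p))) := by
        rw [hsum.tsum_sub hsum', tsum_mul_left, tsum_mul_right, (hasSum_coshTerm x).tsum_eq]
    _ ≤ ∑' k : ℕ, coshTerm x k * ((k : ℝ) + 1) ^ p := by
        refine (hsum.sub hsum').tsum_le_tsum (fun k => ?_) (summable_coshTerm_mul_rpow x p)
        rw [mul_left_comm (a ^ 2), ← mul_sub]
        exact mul_le_mul_of_nonneg_left (two_mul_sub_sq_mul_rpow_neg_le (by positivity) p a)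
          (coshTerm_nonneg x k)

theorem tsum_coshTerm_mul_rpow_isTheta (p : ℝ) :
    (fun x => ∑' k : ℕ, coshTerm x k * ((k : ℝ) + 1) ^ p) =Θ[𝓟 (Ici 0)]
      fun x => (1 + x) ^ p * exp x := by
  obtain ⟨C, hC, upper⟩ := exists_tsum_coshTerm_mul_rpow_le p
  obtain ⟨B, hB, upper_neg⟩ := exists_tsum_coshTerm_mul_rpow_le (-p)
  refine (isTheta_principal_iff_of_nonneg
    (fun x _ => tsum_nonneg fun k => mul_nonneg (coshTerm_nonneg x k) (by positivity))
    fun x (hx : 0 ≤ x) => by positivity).2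
    ⟨(4 * B)⁻¹, C, by positivity, hC, fun x (hx : 0 ≤ x) => ⟨?_, upper x hx⟩⟩
  set a := (2 * B)⁻¹ * (1 + x) ^ p with ha
  calc (4 * B)⁻¹ * ((1 + x) ^ p * exp x)
      = a * exp x - a ^ 2 * (B * ((1 + x) ^ (-p) * exp x)) := by
        rw [ha, rpow_neg (by positivity)]
        field_simp
        ring
    _ ≤ a * exp x - a ^ 2 * ∑' k : ℕ, coshTerm x k * ((k : ℝ) + 1) ^ (-p) := by
        gcongr
        exact upper_neg x hx
    _ ≤ ∑' k : ℕ, coshTerm x k * ((k : ℝ) + 1) ^ p :=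
        mul_exp_sub_le_tsum_coshTerm_mul_rpow (by positivity) x p

end CoshMoments

section Bessel

theorem besselI_eq_mul_tsum_coshTerm {x : ℝ} (hx : 0 < x) (ν : ℝ) :
    besselI ν x = (x / 2) ^ ν / √π *
      ∑' k : ℕ, coshTerm x k * (Gamma (k + 1 / 2) / Gamma (k + ν + 1)) := by
  rw [besselI, ← tsum_mul_left]
  refine tsum_congr fun k => ?_
  have hpow : (x / 2) ^ (2 * k + ν) = (x / 2) ^ ν * (x ^ (2 * k) / 2 ^ (2 * k)) := by
    rw [add_comm, rpow_add (by positivity), ← div_pow, ← rpow_natCast _ (2 * k)]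
    push_cast
    rfl
  have hfactorial : coshTerm x k * Gamma (k + 1 / 2) / √π =
      x ^ (2 * k) / 2 ^ (2 * k) / k.factorial := by
    have h := factorial_mul_Gamma_nat_add_half k
    rw [div_mul_eq_mul_div, eq_div_iff (by positivity)] at h
    rw [coshTerm, div_div, div_mul_eq_mul_div, div_div, div_eq_div_iff (by positivity)
      (by positivity)]
    linear_combination x ^ (2 * k) * h
  calc (x / 2) ^ (2 * k + ν) / (k.factorial * Gamma (k + ν + 1))
      = (x / 2) ^ ν * (x ^ (2 * k) / 2 ^ (2 * k) / k.factorial) / Gamma (k + ν + 1) := by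
        rw [hpow, ← div_div, mul_div_assoc]
    _ = (x / 2) ^ ν / √π * (coshTerm x k * (Gamma (k + 1 / 2) / Gamma (k + ν + 1))) := by
        rw [← hfactorial]
        ring

theorem Gamma_half_div_Gamma_isTheta {ν : ℝ} (hν : -1 < ν) :
    (fun k : ℕ => Gamma (k + 1 / 2) / Gamma (k + ν + 1)) =Θ[⊤]
      fun k => ((k : ℝ) + 1) ^ (-(ν + 1 / 2)) := by
  have hnum : (fun k : ℕ => Gamma (k + 1 / 2)) =Θ[⊤]
      fun k => (k.factorial : ℝ) * ((k : ℝ) + 1) ^ (-1 / 2 : ℝ) := by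
    refine EventuallyEq.trans_isTheta (.of_forall fun k => ?_)
      (Gamma_nat_add_isTheta (ν := -1 / 2) (by norm_num))
    ring_nf
  refine (hnum.div (Gamma_nat_add_isTheta hν)).trans_eventuallyEq (.of_forall fun k => ?_)
  simp only
  rw [mul_div_mul_left _ _ (by positivity), ← rpow_sub (by positivity)]
  ring_nf

theorem besselI_isTheta {ν : ℝ} (hν : -1 < ν) :
    besselI ν =Θ[𝓟 (Ioi 0)] fun x => x ^ ν * ((1 + x) ^ (-(ν + 1 / 2)) * exp x) := by
  have hΓ (k : ℕ) : 0 < Gamma (k + ν + 1) := Gamma_pos_of_pos (by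
    rw [add_assoc]
    linarith [k.cast_nonneg (α := ℝ)])
  have hsum := (isTheta_tsum_mul (Gamma_half_div_Gamma_isTheta hν)
    (fun k => div_nonneg (Gamma_nonneg_of_nonneg (by positivity)) (hΓ k).le)
    (fun k => by positivity) (fun x (_ : x ∈ Ici 0) k => coshTerm_nonneg x k)
    fun x _ => summable_coshTerm_mul_rpow x _).trans
      (tsum_coshTerm_mul_rpow_isTheta (-(ν + 1 / 2)))
  have hpow : besselI ν =ᶠ[𝓟 (Ioi 0)] fun x => (2 ^ ν * √π)⁻¹ *
      (x ^ ν * ∑' k : ℕ, coshTerm x k * (Gamma (k + 1 / 2) / Gamma (k + ν + 1))) :=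
    eventuallyEq_principal.2 fun x (hx : 0 < x) => by
      rw [besselI_eq_mul_tsum_coshTerm hx, div_rpow hx.le zero_le_two, div_div, div_eq_inv_mul,
        mul_assoc]
  exact hpow.trans_isTheta ((isTheta_const_mul_left (by positivity)).2
    ((isTheta_refl _ _).mul (hsum.mono (principal_mono.2 Ioi_subset_Ici_self))))

theorem besselI_nonneg {ν x : ℝ} (hν : -1 < ν) (hx : 0 ≤ x) : 0 ≤ besselI ν x :=
  tsum_nonneg fun k => div_nonneg (by positivity) (mul_nonneg (by positivity)
    (Gamma_nonneg_of_nonneg (by linarith [k.cast_nonneg (α := ℝ)])))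

theorem measurable_besselI (ν : ℝ) : Measurable (besselI ν) :=
  .tsum fun k => by fun_prop

end Bessel

section HeatKernel

/-- The algebraic part of the two-sided estimate of `besselHeat ζ t r s`, with `a = r * s / 2`;
the remaining factor is `exp (-(r - s) ^ 2 / (4 * t))`. -/
noncomputable def heatProfile (ζ a t : ℝ) : ℝ :=
  t ^ (-(1 / 2) : ℝ) * (a + t) ^ (-ζ)

theorem heatProfile_nonneg (ζ : ℝ) {a t : ℝ} (ha : 0 ≤ a) (ht : 0 ≤ t) : 0 ≤ heatProfile ζ a t := by
  unfold heatProfile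
  positivity

theorem measurable_besselHeat (ζ r s : ℝ) : Measurable fun t => besselHeat ζ t r s := by
  have := (measurable_besselI (ζ - 1 / 2)).comp (f := fun t => r * s / (2 * t)) (by fun_prop)
  unfold besselHeat
  fun_prop

theorem besselHeat_nonneg {ζ t r s : ℝ} (hζ : -1 / 2 < ζ) (ht : 0 < t) (hr : 0 < r) (hs : 0 < s) :
    0 ≤ besselHeat ζ t r s :=
  mul_nonneg (by positivity) (besselI_nonneg (by linarith) (by positivity))

theorem rpow_mul_besselProfile_eq (ζ : ℝ) {t r s : ℝ} (ht : 0 < t) (hr : 0 < r) (hs : 0 < s) :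
    (r * s) ^ ((1 : ℝ) / 2 - ζ) / (2 * t) * exp (-(r ^ 2 + s ^ 2) / (4 * t)) *
      ((r * s / (2 * t)) ^ (ζ - 1 / 2) *
        ((1 + r * s / (2 * t)) ^ (-ζ) * exp (r * s / (2 * t)))) =
    2 ^ (-1 / 2 - ζ) * (heatProfile ζ (r * s / 2) t * exp (-(r - s) ^ 2 / (4 * t))) := by
  set x := r * s / (2 * t) with hx
  have hx0 : 0 < x := by positivity
  have hexp : exp (-(r - s) ^ 2 / (4 * t)) = exp (-(r ^ 2 + s ^ 2) / (4 * t)) * exp x := by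
    rw [← exp_add]
    congr 1
    rw [hx]
    field_simp
    ring
  have hrs : r * s = 2 * t * x := by
    rw [hx]
    field_simp
  rw [hexp, heatProfile, hrs, show 2 * t * x / 2 + t = t * (1 + x) by ring,
    mul_rpow ht.le (by positivity), mul_rpow (by positivity) hx0.le]
  have hx_pow : x ^ (1 / 2 - ζ) * x ^ (ζ - 1 / 2) = 1 := by
    rw [← rpow_add hx0]
    ring_nf
    exact rpow_zero x
  have ht_pow : (2 * t) ^ (1 / 2 - ζ) / (2 * t) =
      2 ^ (-1 / 2 - ζ) * (t ^ (-(1 / 2) : ℝ) * t ^ (-ζ)) := by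
    rw [← rpow_sub_one (by positivity), ← rpow_add ht, mul_rpow two_pos.le ht.le]
    ring_nf
  linear_combination (2 * t) ^ (1 / 2 - ζ) / (2 * t) * (1 + x) ^ (-ζ) *
    (exp (-(r ^ 2 + s ^ 2) / (4 * t)) * exp x) * hx_pow +
    (1 + x) ^ (-ζ) * (exp (-(r ^ 2 + s ^ 2) / (4 * t)) * exp x) * ht_pow

theorem besselHeat_isTheta {ζ : ℝ} (hζ : -1 / 2 < ζ) :
    (fun p : (ℝ × ℝ) × ℝ => besselHeat ζ p.2 p.1.1 p.1.2) =Θ[𝓟 ((Ioi 0 ×ˢ Ioi 0) ×ˢ Ioi 0)]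
      fun p => heatProfile ζ (p.1.1 * p.1.2 / 2) p.2 *
        exp (-(p.1.1 - p.1.2) ^ 2 / (4 * p.2)) := by
  have hmaps : Tendsto (fun p : (ℝ × ℝ) × ℝ => p.1.1 * p.1.2 / (2 * p.2))
      (𝓟 ((Ioi 0 ×ˢ Ioi 0) ×ˢ Ioi 0)) (𝓟 (Ioi 0)) := by
    refine tendsto_principal_principal.2 ?_
    rintro ⟨⟨r, s⟩, t⟩ ⟨⟨hr : 0 < r, hs : 0 < s⟩, ht : 0 < t⟩
    exact div_pos (mul_pos hr hs) (mul_pos two_pos ht)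
  obtain ⟨upper, lower⟩ := besselI_isTheta (ν := ζ - 1 / 2) (by linarith)
  rw [← isTheta_const_mul_right (c := (2 : ℝ) ^ (-1 / 2 - ζ)) (by positivity)]
  refine ((isTheta_refl (fun p : (ℝ × ℝ) × ℝ => (p.1.1 * p.1.2) ^ ((1 : ℝ) / 2 - ζ) / (2 * p.2) *
    exp (-(p.1.1 ^ 2 + p.1.2 ^ 2) / (4 * p.2))) _).mul
      ⟨upper.comp_tendsto hmaps, lower.comp_tendsto hmaps⟩).trans_eventuallyEq
        (eventuallyEq_principal.2 ?_)
  rintro ⟨⟨r, s⟩, t⟩ ⟨⟨hr, hs⟩, ht⟩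
  simpa using rpow_mul_besselProfile_eq ζ ht hr hs

end HeatKernel

section StableDensity

/-- `w` is a density on `(0, ∞)` of the one-sided `β`-stable law with Laplace transform
`exp (-l ^ β)`; its values outside `(0, ∞)` are irrelevant. -/
structure IsStableDensity (β : ℝ) (w : ℝ → ℝ) : Prop where
  nonneg : ∀ τ, 0 < τ → 0 ≤ w τ
  measurable : Measurable w
  laplace : ∀ l, 0 ≤ l → ∫ τ in Ioi (0 : ℝ), exp (-τ * l) * w τ = exp (-l ^ β)

theorem IsStableSubordinatorDensity.isStableDensity_one {α : ℝ} {σ : ℝ → ℝ → ℝ}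
    (hσ : IsStableSubordinatorDensity α σ) : IsStableDensity (α / 2) (σ 1) where
  nonneg := hσ.1 1 one_pos
  measurable := hσ.2.1 1 one_pos
  laplace l hl := by simpa using hσ.2.2 1 l one_pos hl

namespace IsStableDensity

variable {β : ℝ} {w : ℝ → ℝ}

theorem integrableOn_exp_mul (hw : IsStableDensity β w) {l : ℝ} (hl : 0 ≤ l) :
    IntegrableOn (fun τ => exp (-τ * l) * w τ) (Ioi 0) :=
  .of_integral_ne_zero (hw.laplace l hl ▸ (exp_pos _).ne')

theorem integrableOn (hw : IsStableDensity β w) : IntegrableOn w (Ioi 0) := by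
  simpa using hw.integrableOn_exp_mul le_rfl

theorem integral_eq_one (hw : IsStableDensity β w) (hβ : 0 < β) :
    ∫ τ in Ioi (0 : ℝ), w τ = 1 := by
  simpa [zero_rpow hβ.ne'] using hw.laplace 0 le_rfl

theorem integrableOn_one_sub_exp_mul (hw : IsStableDensity β w) {D : ℝ} (hD : 0 < D) :
    IntegrableOn (fun τ => (1 - exp (-(τ / D))) * w τ) (Ioi 0) := by
  refine (hw.integrableOn.sub (hw.integrableOn_exp_mul (inv_pos.2 hD).le)).congr (.of_forall ?_)
  intro τ
  simp only [Pi.sub_apply, ← div_eq_mul_inv, neg_div, sub_mul, one_mul]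

theorem integral_one_sub_exp_mul (hw : IsStableDensity β w) (hβ : 0 < β) {D : ℝ} (hD : 0 < D) :
    ∫ τ in Ioi (0 : ℝ), (1 - exp (-(τ / D))) * w τ = 1 - exp (-D ^ (-β)) := by
  simp only [sub_mul, one_mul, div_eq_mul_inv, ← neg_mul]
  rw [integral_sub hw.integrableOn (hw.integrableOn_exp_mul (inv_pos.2 hD).le),
    hw.integral_eq_one hβ, hw.laplace _ (inv_pos.2 hD).le, inv_rpow hD.le, rpow_neg hD.le]

theorem integral_one_sub_exp_mul_le (hw : IsStableDensity β w) (hβ : 0 < β) {D : ℝ} (hD : 0 < D) :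
    ∫ τ in Ioi (0 : ℝ), (1 - exp (-(τ / D))) * w τ ≤ D ^ (-β) := by
  rw [hw.integral_one_sub_exp_mul hβ hD]
  linarith [add_one_le_exp (-D ^ (-β))]

theorem half_rpow_le_integral_one_sub_exp_mul (hw : IsStableDensity β w) (hβ : 0 < β) {D : ℝ}
    (hD : 1 ≤ D) : D ^ (-β) / 2 ≤ ∫ τ in Ioi (0 : ℝ), (1 - exp (-(τ / D))) * w τ := by
  have hD0 : 0 < D := one_pos.trans_le hD
  have hle : D ^ (-β) ≤ 1 := rpow_le_one_of_one_le_of_nonpos hD (neg_nonpos.2 hβ.le)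
  rw [hw.integral_one_sub_exp_mul hβ hD0]
  calc D ^ (-β) / 2 ≤ D ^ (-β) / (1 + D ^ (-β)) := by
        gcongr
        linarith
    _ ≤ 1 - exp (-D ^ (-β)) := div_one_add_le_one_sub_exp_neg (by positivity)

theorem integrable_rpow_mul_exp_mul_prod (hw : IsStableDensity β w) (hβ : 0 < β) {q : ℝ}
    (hq : 0 < q) :
    Integrable (fun p : ℝ × ℝ => p.1 ^ (q - 1) * (exp (-p.2 * p.1) * w p.2))
      ((volume.restrict (Ioi (0 : ℝ))).prod (volume.restrict (Ioi (0 : ℝ)))) := by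
  have hmeas : Measurable fun p : ℝ × ℝ => p.1 ^ (q - 1) * (exp (-p.2 * p.1) * w p.2) := by
    have := hw.measurable
    fun_prop
  refine (integrable_prod_iff hmeas.aestronglyMeasurable).2 ⟨?_, ?_⟩
  · filter_upwards [ae_restrict_mem measurableSet_Ioi] with l hl
    exact (hw.integrableOn_exp_mul (le_of_lt hl)).const_mul _
  · have hint : IntegrableOn (fun l : ℝ => l ^ (q - 1) * exp (-l ^ β)) (Ioi 0) :=
      integrableOn_rpow_mul_exp_neg_rpow (by linarith) hβ
    refine IntegrableOn.congr_fun hint (fun l (hl : 0 < l) => ?_) measurableSet_Ioi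
    simp only
    rw [← hw.laplace l hl.le, ← integral_const_mul]
    refine setIntegral_congr_fun measurableSet_Ioi fun τ hτ => ?_
    have := hw.nonneg τ hτ
    exact (norm_of_nonneg (by positivity)).symm

-- The Gamma integral writes `Gamma q * τ ^ (-q)` as an average of the exponentials
-- `exp (-τ * l)`, whose integrals against `w` are known.
theorem integrableOn_rpow_neg_mul (hw : IsStableDensity β w) (hβ : 0 < β) {q : ℝ} (hq : 0 < q) :
    IntegrableOn (fun τ => τ ^ (-q) * w τ) (Ioi 0) := by
  have hint := (hw.integrable_rpow_mul_exp_mul_prod hβ hq).integral_prod_right.mul_const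
    (Gamma q)⁻¹
  refine IntegrableOn.congr_fun hint (fun τ (hτ : 0 < τ) => ?_) measurableSet_Ioi
  simp only [← mul_assoc, neg_mul]
  rw [integral_mul_const, integral_rpow_mul_exp_neg_mul_Ioi hq hτ, one_div, inv_rpow hτ.le,
    rpow_neg hτ.le]
  have := (Gamma_pos_of_pos hq).ne'
  field_simp

theorem integrableOn_one_add_div_rpow_mul (hw : IsStableDensity β w) (hβ : 0 < β) {q D : ℝ}
    (hq : 0 < q) (hD : 0 ≤ D) : IntegrableOn (fun τ => (1 + D / τ) ^ q * w τ) (Ioi 0) := by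
  have hmeas := hw.measurable
  refine ((hw.integrableOn.add ((hw.integrableOn_rpow_neg_mul hβ hq).const_mul (D ^ q))).const_mul
    (2 ^ q)).mono' (by fun_prop) ?_
  filter_upwards [ae_restrict_mem measurableSet_Ioi] with τ (hτ : 0 < τ)
  have hwτ := hw.nonneg τ hτ
  have hpow : (1 + D / τ) ^ q ≤ 2 ^ q * (1 + D ^ q * τ ^ (-q)) := by
    rw [rpow_neg hτ.le, ← div_eq_mul_inv, ← div_rpow hD hτ.le]
    exact one_add_rpow_le hq.le (by positivity)
  rw [norm_of_nonneg (by positivity)]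
  calc (1 + D / τ) ^ q * w τ ≤ 2 ^ q * (1 + D ^ q * τ ^ (-q)) * w τ := by gcongr
    _ = _ := by
      simp only [Pi.add_apply]
      ring

theorem integrableOn_one_add_div_rpow_mul_exp_mul (hw : IsStableDensity β w) (hβ : 0 < β)
    {q D d : ℝ} (hq : 0 < q) (hD : 0 ≤ D) (hd : 0 ≤ d) :
    IntegrableOn (fun τ => (1 + D / τ) ^ q * exp (-d / (4 * τ)) * w τ) (Ioi 0) := by
  have hmeas := hw.measurable
  refine (hw.integrableOn_one_add_div_rpow_mul hβ hq hD).mono' (by fun_prop) ?_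
  filter_upwards [ae_restrict_mem measurableSet_Ioi] with τ (hτ : 0 < τ)
  have hwτ := hw.nonneg τ hτ
  rw [norm_of_nonneg (by positivity), mul_right_comm]
  exact mul_le_of_le_one_right (by positivity) (exp_neg_div_four_mul_le_one hd hτ.le)

theorem exists_integral_one_add_div_rpow_mul_exp_mul_le (hw : IsStableDensity β w) (hβ : 0 < β)
    {q : ℝ} (hq : 0 < q) : ∃ C : ℝ, 0 < C ∧ ∀ d, 0 < d →
      ∫ τ in Ioi (0 : ℝ), (1 + d / τ) ^ q * exp (-d / (4 * τ)) * w τ ≤ C * d ^ (-β) := by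
  obtain ⟨C, hC, hbound⟩ := exists_one_add_inv_rpow_mul_exp_le hq.le
  refine ⟨C, hC, fun d hd => ?_⟩
  calc ∫ τ in Ioi (0 : ℝ), (1 + d / τ) ^ q * exp (-d / (4 * τ)) * w τ
      ≤ ∫ τ in Ioi (0 : ℝ), C * ((1 - exp (-(τ / d))) * w τ) := by
        refine setIntegral_mono_on (hw.integrableOn_one_add_div_rpow_mul_exp_mul hβ hq hd.le hd.le)
          ((hw.integrableOn_one_sub_exp_mul hd).const_mul C) measurableSet_Ioi fun τ hτ => ?_
        rw [← mul_assoc]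
        refine mul_le_mul_of_nonneg_right ?_ (hw.nonneg τ hτ)
        have h := hbound (τ / d) (div_pos hτ hd)
        rwa [inv_div, div_div, mul_comm τ, ← neg_div] at h
    _ ≤ C * d ^ (-β) := by
        rw [integral_const_mul]
        gcongr
        exact hw.integral_one_sub_exp_mul_le hβ hd

theorem exists_integral_max_one_le (hw : IsStableDensity β w) (hβ : 0 < β) {q : ℝ} (hq : 0 < q) :
    ∃ C : ℝ, 0 < C ∧ ∀ d, 0 ≤ d →
      ∫ τ in Ioi (0 : ℝ), (1 + max 1 d / τ) ^ q * exp (-d / (4 * τ)) * w τ ≤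
        C * max 1 d ^ (-β) := by
  obtain ⟨C, hC, hlarge⟩ := hw.exists_integral_one_add_div_rpow_mul_exp_mul_le hβ hq
  set M := ∫ τ in Ioi (0 : ℝ), (1 + 1 / τ) ^ q * w τ
  refine ⟨max C M, lt_max_of_lt_left hC, fun d hd => ?_⟩
  rcases le_total 1 d with h1d | hd1
  · rw [max_eq_right h1d]
    exact (hlarge d (by positivity)).trans (by gcongr; exact le_max_left C M)
  · rw [max_eq_left hd1, one_rpow, mul_one]
    refine (setIntegral_mono_on ?_ ?_ measurableSet_Ioi fun τ (hτ : 0 < τ) => ?_).trans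
      (le_max_right C M)
    · exact hw.integrableOn_one_add_div_rpow_mul_exp_mul hβ hq zero_le_one hd
    · exact hw.integrableOn_one_add_div_rpow_mul hβ hq zero_le_one
    · rw [mul_right_comm]
      have hwτ := hw.nonneg τ hτ
      exact mul_le_of_le_one_right (by positivity) (exp_neg_div_four_mul_le_one hd hτ.le)

theorem integral_one_sub_exp_mul_le_setIntegral_Icc_add (hw : IsStableDensity β w) {δ K D : ℝ}
    (hδ : 0 < δ) (hK : 0 < K) (hD : 0 < D) :
    ∫ τ in Ioi (0 : ℝ), (1 - exp (-(τ / D))) * w τ ≤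
      (∫ τ in Icc (δ * D) (K * D), w τ) +
        (2 * δ * (∫ τ in Ioi (0 : ℝ), (1 - exp (-(τ / (δ * D)))) * w τ) +
          2 * ∫ τ in Ioi (0 : ℝ), (1 - exp (-(τ / (K * D)))) * w τ) := by
  have hsub : Icc (δ * D) (K * D) ⊆ Ioi 0 := fun τ hτ => (mul_pos hδ hD).trans_le hτ.1
  have hint_Icc : IntegrableOn ((Icc (δ * D) (K * D)).indicator w) (Ioi 0) :=
    hw.integrableOn.indicator measurableSet_Icc
  have hint_δ := (hw.integrableOn_one_sub_exp_mul (mul_pos hδ hD)).const_mul (2 * δ)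
  have hint_K := (hw.integrableOn_one_sub_exp_mul (mul_pos hK hD)).const_mul 2
  rw [← inter_eq_right.2 hsub, ← setIntegral_indicator measurableSet_Icc, ← integral_const_mul,
    ← integral_const_mul, ← integral_add hint_δ hint_K,
    ← integral_add hint_Icc (by exact hint_δ.add hint_K)]
  refine setIntegral_mono_on (hw.integrableOn_one_sub_exp_mul hD)
    (hint_Icc.add (hint_δ.add hint_K)) measurableSet_Ioi fun τ hτ => ?_
  have hindicator : (Icc (δ * D) (K * D)).indicator w τ =
      (Icc (δ * D) (K * D)).indicator 1 τ * w τ := by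
    simp only [← indicator_mul_left, Pi.one_apply, one_mul]
  refine (mul_le_mul_of_nonneg_right (one_sub_exp_neg_div_le_indicator_add hδ hK hD hτ)
    (hw.nonneg τ hτ)).trans_eq ?_
  rw [hindicator]
  ring

theorem exists_rpow_le_setIntegral_Icc (hw : IsStableDensity β w) (hβ : 0 < β) (hβ1 : β < 1) :
    ∃ δ K : ℝ, 0 < δ ∧ 0 < K ∧ ∀ D, 1 ≤ D →
      D ^ (-β) / 4 ≤ ∫ τ in Icc (δ * D) (K * D), w τ := by
  obtain ⟨δ, hδ, hδ_rpow⟩ : ∃ δ : ℝ, 0 < δ ∧ δ ^ (1 - β) = 1 / 16 :=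
    ⟨(1 / 16) ^ (1 - β)⁻¹, by positivity, rpow_inv_rpow (by norm_num) (by linarith)⟩
  obtain ⟨K, hK, hK_rpow⟩ : ∃ K : ℝ, 0 < K ∧ K ^ (-β) = 1 / 16 :=
    ⟨(1 / 16) ^ (-β)⁻¹, by positivity, rpow_inv_rpow (by norm_num) (by linarith)⟩
  refine ⟨δ, K, hδ, hK, fun D hD => ?_⟩
  have hD0 : 0 < D := one_pos.trans_le hD
  have hsplit := hw.integral_one_sub_exp_mul_le_setIntegral_Icc_add hδ hK hD0
  have hlower := hw.half_rpow_le_integral_one_sub_exp_mul hβ hD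
  have hδ_upper : δ * ∫ τ in Ioi (0 : ℝ), (1 - exp (-(τ / (δ * D)))) * w τ ≤ D ^ (-β) / 16 := by
    calc _ ≤ δ * (δ * D) ^ (-β) := by
          gcongr
          exact hw.integral_one_sub_exp_mul_le hβ (by positivity)
      _ = D ^ (-β) / 16 := by
          rw [mul_rpow hδ.le hD0.le, ← mul_assoc, ← rpow_one_add' hδ.le (by linarith),
            ← sub_eq_add_neg, hδ_rpow]
          ring
  have hK_upper : ∫ τ in Ioi (0 : ℝ), (1 - exp (-(τ / (K * D)))) * w τ ≤ D ^ (-β) / 16 := by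
    calc _ ≤ (K * D) ^ (-β) := hw.integral_one_sub_exp_mul_le hβ (by positivity)
      _ = D ^ (-β) / 16 := by
          rw [mul_rpow hK.le hD0.le, hK_rpow]
          ring
  linarith

end IsStableDensity

end StableDensity

section Subordination

variable {ζ β : ℝ} {w : ℝ → ℝ}

theorem heatProfile_eq_one_add_div_rpow_mul (ζ : ℝ) {a t : ℝ} (ha : 0 ≤ a) (ht : 0 < t) :
    heatProfile ζ a t = (1 + a / t) ^ (1 / 2 : ℝ) * (a + t) ^ (-(ζ + 1 / 2)) := by
  rw [heatProfile, one_add_div ht.ne', add_comm t, div_rpow (by positivity) ht.le,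
    rpow_neg ht.le, div_mul_eq_mul_div, ← rpow_add (by positivity), inv_mul_eq_div]
  ring_nf

theorem heatProfile_le_one_add_div_rpow_mul {a t D : ℝ} (hζ : -1 / 2 < ζ) (ha : 0 ≤ a)
    (ht : 0 < t) (hD : 0 < D) :
    heatProfile ζ a t ≤ (1 + D / t) ^ (ζ + 1) * heatProfile ζ a D := by
  have hdiv : 1 + a / t ≤ (1 + D / t) * (1 + a / D) := by
    rw [show (1 + D / t) * (1 + a / D) = 1 + a / t + (D / t + a / D) by field_simp; ring]
    exact le_add_of_nonneg_right (by positivity)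
  have hadd : a + D ≤ (1 + D / t) * (a + t) := by
    rw [show (1 + D / t) * (a + t) = a + D + (t + D / t * a) by field_simp; ring]
    exact le_add_of_nonneg_right (by positivity)
  have hadd_rpow : (a + t) ^ (-(ζ + 1 / 2)) ≤
      (1 + D / t) ^ (ζ + 1 / 2) * (a + D) ^ (-(ζ + 1 / 2)) := by
    rw [rpow_neg (by positivity), rpow_neg (by positivity), ← div_eq_mul_inv, ← one_div,
      div_le_div_iff₀ (by positivity) (by positivity), one_mul,
      ← mul_rpow (by positivity) (by positivity)]
    exact rpow_le_rpow (by positivity) hadd (by linarith)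
  calc heatProfile ζ a t = (1 + a / t) ^ (1 / 2 : ℝ) * (a + t) ^ (-(ζ + 1 / 2)) :=
        heatProfile_eq_one_add_div_rpow_mul ζ ha ht
    _ ≤ ((1 + D / t) * (1 + a / D)) ^ (1 / 2 : ℝ) *
          ((1 + D / t) ^ (ζ + 1 / 2) * (a + D) ^ (-(ζ + 1 / 2))) := by gcongr
    _ = (1 + D / t) ^ (1 / 2 + (ζ + 1 / 2)) *
          ((1 + a / D) ^ (1 / 2 : ℝ) * (a + D) ^ (-(ζ + 1 / 2))) := by
        rw [mul_rpow (by positivity) (by positivity), rpow_add (by positivity) (1 / 2),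
          mul_mul_mul_comm]
    _ = (1 + D / t) ^ (ζ + 1) * heatProfile ζ a D := by
        rw [← heatProfile_eq_one_add_div_rpow_mul ζ ha hD]
        ring_nf

theorem mul_heatProfile_le_heatProfile_mul_exp {a d D τ δ K : ℝ} (hζ : -1 / 2 < ζ) (ha : 0 ≤ a)
    (hD : 0 < D) (hδ : 0 < δ) (hd : d ≤ D) (hτ : τ ∈ Icc (δ * D) (K * D)) :
    ((1 + K) ^ (ζ + 1))⁻¹ * exp (-(1 / (4 * δ))) * heatProfile ζ a D ≤
      heatProfile ζ a τ * exp (-d / (4 * τ)) := by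
  have hτ0 : 0 < τ := (mul_pos hδ hD).trans_le hτ.1
  have hK : 0 < K := pos_of_mul_pos_left (hτ0.trans_le hτ.2) hD.le
  have hprofile_τ := heatProfile_nonneg ζ ha hτ0.le
  have hprofile : ((1 + K) ^ (ζ + 1))⁻¹ * heatProfile ζ a D ≤ heatProfile ζ a τ := by
    rw [inv_mul_le_iff₀ (by positivity)]
    refine (heatProfile_le_one_add_div_rpow_mul hζ ha hD hτ0).trans ?_
    gcongr
    · linarith
    · exact (div_le_iff₀ hD).2 hτ.2
  have hexp : exp (-(1 / (4 * δ))) ≤ exp (-d / (4 * τ)) := by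
    rw [exp_le_exp, neg_div, neg_le_neg_iff, div_le_div_iff₀ (by positivity) (by positivity)]
    linarith [hτ.1, mul_le_mul_of_nonneg_left hd hδ.le]
  rw [mul_right_comm]
  exact mul_le_mul hprofile hexp (by positivity) hprofile_τ

namespace IsStableDensity

theorem heatProfile_mul_exp_mul_le (hw : IsStableDensity β w) (hζ : -1 / 2 < ζ) {a d D τ : ℝ}
    (ha : 0 ≤ a) (hD : 0 < D) (hτ : 0 < τ) :
    heatProfile ζ a τ * exp (-d / (4 * τ)) * w τ ≤
      heatProfile ζ a D * ((1 + D / τ) ^ (ζ + 1) * exp (-d / (4 * τ)) * w τ) := by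
  have hwτ := hw.nonneg τ hτ
  calc heatProfile ζ a τ * exp (-d / (4 * τ)) * w τ
      ≤ (1 + D / τ) ^ (ζ + 1) * heatProfile ζ a D * exp (-d / (4 * τ)) * w τ := by
        gcongr
        exact heatProfile_le_one_add_div_rpow_mul hζ ha hτ hD
    _ = _ := by ring

theorem integrableOn_heatProfile_mul_exp_mul (hw : IsStableDensity β w) (hβ : 0 < β)
    (hζ : -1 / 2 < ζ) {a d : ℝ} (ha : 0 ≤ a) (hd : 0 ≤ d) :
    IntegrableOn (fun τ => heatProfile ζ a τ * exp (-d / (4 * τ)) * w τ) (Ioi 0) := by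
  have hmeas := hw.measurable
  refine ((hw.integrableOn_one_add_div_rpow_mul_exp_mul hβ (by linarith : 0 < ζ + 1) zero_le_one
    hd).const_mul (heatProfile ζ a 1)).mono' (by unfold heatProfile; fun_prop) ?_
  filter_upwards [ae_restrict_mem measurableSet_Ioi] with τ (hτ : 0 < τ)
  have hwτ := hw.nonneg τ hτ
  have hprofile := heatProfile_nonneg ζ ha hτ.le
  rw [norm_of_nonneg (by positivity)]
  exact hw.heatProfile_mul_exp_mul_le hζ ha one_pos hτ

theorem exists_integral_heatProfile_mul_exp_mul_le (hw : IsStableDensity β w) (hβ : 0 < β)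
    (hζ : -1 / 2 < ζ) : ∃ C : ℝ, 0 < C ∧ ∀ a d, 0 ≤ a → 0 ≤ d →
      ∫ τ in Ioi (0 : ℝ), heatProfile ζ a τ * exp (-d / (4 * τ)) * w τ ≤
        C * (heatProfile ζ a (max 1 d) * max 1 d ^ (-β)) := by
  have hq : 0 < ζ + 1 := by linarith
  obtain ⟨C, hC, hbound⟩ := hw.exists_integral_max_one_le hβ hq
  refine ⟨C, hC, fun a d ha hd => ?_⟩
  have hD : 0 < max 1 d := lt_max_of_lt_left one_pos
  calc ∫ τ in Ioi (0 : ℝ), heatProfile ζ a τ * exp (-d / (4 * τ)) * w τ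
      ≤ heatProfile ζ a (max 1 d) *
          ∫ τ in Ioi (0 : ℝ), (1 + max 1 d / τ) ^ (ζ + 1) * exp (-d / (4 * τ)) * w τ := by
        rw [← integral_const_mul]
        exact setIntegral_mono_on (hw.integrableOn_heatProfile_mul_exp_mul hβ hζ ha hd)
          ((hw.integrableOn_one_add_div_rpow_mul_exp_mul hβ hq hD.le hd).const_mul _)
          measurableSet_Ioi fun τ hτ => hw.heatProfile_mul_exp_mul_le hζ ha hD hτ
    _ ≤ heatProfile ζ a (max 1 d) * (C * max 1 d ^ (-β)) :=
        mul_le_mul_of_nonneg_left (hbound d hd) (heatProfile_nonneg ζ ha hD.le)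
    _ = _ := mul_left_comm _ _ _

theorem exists_le_integral_heatProfile_mul_exp_mul (hw : IsStableDensity β w) (hβ : 0 < β)
    (hβ1 : β < 1) (hζ : -1 / 2 < ζ) : ∃ c : ℝ, 0 < c ∧ ∀ a d, 0 ≤ a → 0 ≤ d →
      c * (heatProfile ζ a (max 1 d) * max 1 d ^ (-β)) ≤
        ∫ τ in Ioi (0 : ℝ), heatProfile ζ a τ * exp (-d / (4 * τ)) * w τ := by
  obtain ⟨δ, K, hδ, hK, hmass⟩ := hw.exists_rpow_le_setIntegral_Icc hβ hβ1
  set m := ((1 + K) ^ (ζ + 1))⁻¹ * exp (-(1 / (4 * δ)))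
  refine ⟨m / 4, by positivity, fun a d ha hd => ?_⟩
  set D := max 1 d
  have hD : 0 < D := lt_max_of_lt_left one_pos
  have hpos : ∀ τ ∈ Icc (δ * D) (K * D), 0 < τ := fun τ hτ => (mul_pos hδ hD).trans_le hτ.1
  have hprofile_D := heatProfile_nonneg ζ ha hD.le
  have hint := hw.integrableOn_heatProfile_mul_exp_mul hβ hζ ha hd
  calc m / 4 * (heatProfile ζ a D * D ^ (-β)) = m * heatProfile ζ a D * (D ^ (-β) / 4) := by ring
    _ ≤ m * heatProfile ζ a D * ∫ τ in Icc (δ * D) (K * D), w τ :=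
        mul_le_mul_of_nonneg_left (hmass D (le_max_left 1 d)) (by positivity)
    _ ≤ ∫ τ in Icc (δ * D) (K * D), heatProfile ζ a τ * exp (-d / (4 * τ)) * w τ := by
        rw [← integral_const_mul]
        exact setIntegral_mono_on ((hw.integrableOn.mono_set hpos).const_mul _)
          (hint.mono_set hpos) measurableSet_Icc fun τ hτ =>
            mul_le_mul_of_nonneg_right (mul_heatProfile_le_heatProfile_mul_exp hζ ha hD hδ
              (le_max_right 1 d) hτ) (hw.nonneg τ (hpos τ hτ))
    _ ≤ _ := setIntegral_mono_set hint ((ae_restrict_iff' measurableSet_Ioi).2 (.of_forall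
          fun τ (hτ : 0 < τ) => mul_nonneg (mul_nonneg (heatProfile_nonneg ζ ha hτ.le)
            (exp_pos _).le) (hw.nonneg τ hτ))) (LE.le.eventuallyLE hpos)

theorem integral_heatProfile_mul_exp_mul_isTheta (hw : IsStableDensity β w) (hβ : 0 < β)
    (hβ1 : β < 1) (hζ : -1 / 2 < ζ) :
    (fun p : ℝ × ℝ => ∫ τ in Ioi (0 : ℝ), heatProfile ζ p.1 τ * exp (-p.2 / (4 * τ)) * w τ)
      =Θ[𝓟 (Ici 0 ×ˢ Ici 0)]
        fun p => heatProfile ζ p.1 (max 1 p.2) * max 1 p.2 ^ (-β) := by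
  obtain ⟨C, hC, upper⟩ := hw.exists_integral_heatProfile_mul_exp_mul_le hβ hζ
  obtain ⟨c, hc, lower⟩ := hw.exists_le_integral_heatProfile_mul_exp_mul hβ hβ1 hζ
  refine (isTheta_principal_iff_of_nonneg
    (fun p hp => setIntegral_nonneg measurableSet_Ioi fun τ (hτ : 0 < τ) => ?_)
    fun p hp => mul_nonneg (heatProfile_nonneg ζ hp.1 (by positivity)) (by positivity)).2
      ⟨c, C, hc, hC, fun p hp => ⟨lower p.1 p.2 hp.1 hp.2, upper p.1 p.2 hp.1 hp.2⟩⟩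
  exact mul_nonneg (mul_nonneg (heatProfile_nonneg ζ hp.1 hτ.le) (exp_pos _).le) (hw.nonneg τ hτ)

end IsStableDensity

theorem subKernel_nonneg {α t r s : ℝ} {σ : ℝ → ℝ → ℝ} (hζ : -1 / 2 < ζ)
    (hσ : IsStableSubordinatorDensity α σ) (ht : 0 < t) (hr : 0 < r) (hs : 0 < s) :
    0 ≤ subKernel ζ σ t r s :=
  setIntegral_nonneg measurableSet_Ioi fun τ hτ =>
    mul_nonneg (besselHeat_nonneg hζ hτ hr hs) (hσ.1 t ht τ hτ)

theorem subKernel_isTheta_heatProfile {α : ℝ} {σ : ℝ → ℝ → ℝ} (hζ : -1 / 2 < ζ) (hα0 : 0 < α)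
    (hα2 : α < 2) (hσ : IsStableSubordinatorDensity α σ) :
    (fun p : ℝ × ℝ => subKernel ζ σ 1 p.1 p.2) =Θ[𝓟 (Ioi 0 ×ˢ Ioi 0)]
      fun p => heatProfile ζ (p.1 * p.2 / 2) (max 1 ((p.1 - p.2) ^ 2)) *
        max 1 ((p.1 - p.2) ^ 2) ^ (-(α / 2)) := by
  have hw := hσ.isStableDensity_one
  have hmul {p : ℝ × ℝ} (hp : p ∈ Ioi (0 : ℝ) ×ˢ Ioi (0 : ℝ)) : 0 ≤ p.1 * p.2 / 2 :=
    div_nonneg (mul_nonneg (le_of_lt hp.1) (le_of_lt hp.2)) zero_le_two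
  have hmaps : Tendsto (fun p : ℝ × ℝ => (p.1 * p.2 / 2, (p.1 - p.2) ^ 2))
      (𝓟 (Ioi 0 ×ˢ Ioi 0)) (𝓟 (Ici 0 ×ˢ Ici 0)) :=
    tendsto_principal_principal.2 fun p hp => ⟨hmul hp, sq_nonneg (p.1 - p.2)⟩
  obtain ⟨upper, lower⟩ := hw.integral_heatProfile_mul_exp_mul_isTheta (ζ := ζ)
    (by linarith) (by linarith) hζ
  refine (isTheta_setIntegral_mul measurableSet_Ioi (besselHeat_isTheta hζ)
    (fun p hp τ hτ => besselHeat_nonneg hζ hτ hp.1 hp.2)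
    (fun p hp τ hτ => mul_nonneg (heatProfile_nonneg ζ (hmul hp) (le_of_lt hτ)) (exp_pos _).le)
    hw.nonneg
    (fun p _ => ((measurable_besselHeat ζ p.1 p.2).mul hw.measurable).aestronglyMeasurable)
    fun p hp => hw.integrableOn_heatProfile_mul_exp_mul (by linarith) hζ (hmul hp)
      (sq_nonneg _)).trans ⟨upper.comp_tendsto hmaps, lower.comp_tendsto hmaps⟩

/-- The five-case function `F` of the theorem in closed form, with `max 1 ((r - s) ^ 2)` as the
dominant subordination time. -/
noncomputable def subProfile (ζ α r s : ℝ) : ℝ :=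
  max 1 ((r - s) ^ 2) ^ (-(1 + α) / 2) * max (r * s) (max 1 ((r - s) ^ 2)) ^ (-ζ)

theorem subProfile_nonneg (ζ α r s : ℝ) : 0 ≤ subProfile ζ α r s :=
  mul_nonneg (by positivity) (by positivity)

theorem subProfile_of_sq_le_one {α r s : ℝ} (h : (r - s) ^ 2 ≤ 1) :
    subProfile ζ α r s = max (r * s) 1 ^ (-ζ) := by
  rw [subProfile, max_eq_left h, one_rpow, one_mul]

theorem sq_rpow_eq_abs_rpow (x p : ℝ) : (x ^ 2) ^ p = |x| ^ (2 * p) := by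
  rw [← sq_abs, ← rpow_natCast_mul (abs_nonneg x), Nat.cast_ofNat]

theorem subProfile_of_mul_le_sq {α r s : ℝ} (h1 : 1 ≤ (r - s) ^ 2) (h : r * s ≤ (r - s) ^ 2) :
    subProfile ζ α r s = |r - s| ^ (-(2 * ζ + 1 + α)) := by
  rw [subProfile, max_eq_right h1, max_eq_right h, ← rpow_add (one_pos.trans_le h1),
    sq_rpow_eq_abs_rpow]
  ring_nf

theorem subProfile_of_sq_le_mul {α r s : ℝ} (h1 : 1 ≤ (r - s) ^ 2) (h : (r - s) ^ 2 ≤ r * s) :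
    subProfile ζ α r s = (r * s) ^ (-ζ) * |r - s| ^ (-(1 + α)) := by
  rw [subProfile, max_eq_right h1, max_eq_left h, sq_rpow_eq_abs_rpow, mul_comm]
  ring_nf

theorem half_add_isTheta_max :
    (fun p : ℝ × ℝ => p.1 / 2 + p.2) =Θ[𝓟 (Ici 0 ×ˢ Ici 0)] fun p => max p.1 p.2 := by
  refine (isTheta_principal_iff_of_nonneg
    (fun p hp => add_nonneg (div_nonneg hp.1 zero_le_two) hp.2)
    fun p hp => le_max_of_le_left hp.1).2 ⟨1 / 2, 2, by norm_num, by norm_num, fun p hp => ?_⟩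
  have h1 : 0 ≤ p.1 := hp.1
  have h2 : 0 ≤ p.2 := hp.2
  constructor
  · rcases max_cases p.1 p.2 with h | h <;> linarith
  · linarith [le_max_left p.1 p.2, le_max_right p.1 p.2]

theorem subKernel_isTheta_subProfile {α : ℝ} {σ : ℝ → ℝ → ℝ} (hζ : -1 / 2 < ζ) (hα0 : 0 < α)
    (hα2 : α < 2) (hσ : IsStableSubordinatorDensity α σ) :
    (fun p : ℝ × ℝ => subKernel ζ σ 1 p.1 p.2) =Θ[𝓟 (Ioi 0 ×ˢ Ioi 0)]
      fun p => subProfile ζ α p.1 p.2 := by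
  have hmaps : Tendsto (fun p : ℝ × ℝ => (p.1 * p.2, max 1 ((p.1 - p.2) ^ 2)))
      (𝓟 (Ioi 0 ×ˢ Ioi 0)) (𝓟 (Ici 0 ×ˢ Ici 0)) :=
    tendsto_principal_principal.2 fun p hp =>
      ⟨mem_Ici.2 (mul_nonneg (le_of_lt hp.1) (le_of_lt hp.2)),
        zero_le_one.trans (le_max_left 1 ((p.1 - p.2) ^ 2))⟩
  have hadd := (half_add_isTheta_max.rpow (r := -ζ)
    (eventually_principal.2 fun p hp => add_nonneg (div_nonneg hp.1 zero_le_two) hp.2)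
    (eventually_principal.2 fun p hp => le_max_of_le_left hp.1))
  refine (subKernel_isTheta_heatProfile hζ hα0 hα2 hσ).trans (EventuallyEq.trans_isTheta
    (.of_forall fun p => ?_) ((isTheta_refl (fun p : ℝ × ℝ =>
      max 1 ((p.1 - p.2) ^ 2) ^ (-(1 + α) / 2)) _).mul
        ⟨hadd.1.comp_tendsto hmaps, hadd.2.comp_tendsto hmaps⟩))
  simp only [Function.comp_apply]
  rw [heatProfile, mul_right_comm, ← rpow_add (lt_max_of_lt_left one_pos)]
  ring_nf

end Subordination

theorem stmt4 (ζ α : ℝ) (hζ : -1/2 < ζ) (hα0 : 0 < α) (hα2 : α < 2)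
    (σ : ℝ → ℝ → ℝ) (hσ : IsStableSubordinatorDensity α σ) :
    ∃ c C : ℝ, 0 < c ∧ 0 < C ∧
      ∀ r s : ℝ, 0 < r → 0 < s →
        (r * s < 1 → (r - s) ^ 2 < 1 →
          c ≤ subKernel ζ σ 1 r s ∧ subKernel ζ σ 1 r s ≤ C) ∧
        ((r - s) ^ 2 < 1 → 1 < r * s →
          c * (r * s) ^ (-ζ) ≤ subKernel ζ σ 1 r s ∧
            subKernel ζ σ 1 r s ≤ C * (r * s) ^ (-ζ)) ∧
        (r * s < 1 → 1 < (r - s) ^ 2 →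
          c * |r - s| ^ (-(2 * ζ + 1 + α)) ≤ subKernel ζ σ 1 r s ∧
            subKernel ζ σ 1 r s ≤ C * |r - s| ^ (-(2 * ζ + 1 + α))) ∧
        (1 < r * s → 1 < (r - s) ^ 2 → r * s < (r - s) ^ 2 →
          c * |r - s| ^ (-(2 * ζ + 1 + α)) ≤ subKernel ζ σ 1 r s ∧
            subKernel ζ σ 1 r s ≤ C * |r - s| ^ (-(2 * ζ + 1 + α))) ∧
        (1 < r * s → 1 < (r - s) ^ 2 → (r - s) ^ 2 < r * s →
          c * (r * s) ^ (-ζ) * |r - s| ^ (-(1 + α)) ≤ subKernel ζ σ 1 r s ∧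
            subKernel ζ σ 1 r s ≤ C * (r * s) ^ (-ζ) * |r - s| ^ (-(1 + α))) := by
  obtain ⟨c, C, hc, hC, hbounds⟩ := (isTheta_principal_iff_of_nonneg
    (fun p hp => subKernel_nonneg hζ hσ one_pos hp.1 hp.2)
    fun p _ => subProfile_nonneg ζ α p.1 p.2).1 (subKernel_isTheta_subProfile hζ hα0 hα2 hσ)
  refine ⟨c, C, hc, hC, fun r s hr hs => ?_⟩
  have h := hbounds (r, s) ⟨hr, hs⟩
  refine ⟨fun hrs hd => ?_, fun hd hrs => ?_, fun hrs hd => ?_, fun _ hd hlt => ?_,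
    fun _ hd hlt => ?_⟩
  · simpa [subProfile_of_sq_le_one hd.le, max_eq_right hrs.le] using h
  · simpa only [subProfile_of_sq_le_one hd.le, max_eq_left hrs.le] using h
  · simpa only [subProfile_of_mul_le_sq hd.le (hrs.trans hd).le] using h
  · simpa only [subProfile_of_mul_le_sq hd.le hlt.le] using h
  · simpa only [subProfile_of_sq_le_mul hd.le hlt.le, mul_assoc] using h
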